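/- arXiv:2505.02336 — 2 statements merged into one kernel-verified Lean document; each statement's English description precedes it below -/
import Mathlib

section
/- Let ω ∈ (D_b^m)^{ℕ₀}. If there exist real numbers β > 1 and C > 1 such that C⁻¹ β^k ≤ |Σ_k^ω| ≤ C β^k for all k ∈ ℕ, then the survivor set K^ω is (log β / log b)-Ahlfors regular. -/
/-!
Two survivors (infinite sequences avoiding `ω`) can be glued at any position `k` across a gap of
`m - 1` digits: fill the gap with digits that are neither the first letter of the forbidden word
starting there nor the last letter of the forbidden word ending there, which is possible since
`b ≥ 3` (`exchange`). Hence all cylinders of level `k` have the same number of continuations of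
length `n - k` up to the factor `b ^ (m - 1)`, and the hypothesis on `|Σ_k^ω|` turns this into the
uniform estimate `card_words_bounds`: that number is comparable to `β ^ (n - k)`.

Put `s = log β / log b`, so that `b ^ s = β`. A ball of radius about `b ^ (-k)` contains a
cylinder of level about `k` around its centre and meets at most five cylinders of level `k`
(`exists_five`). It therefore suffices that the `s`-dimensional Hausdorff measure of a cylinder of
level `k` be comparable to `β ^ (-k)`. For the upper bound, cover it by its subcylinders of level
`n` and let `n` grow (`hausdorff_piece_le`). For the lower bound, replace each set of a countable
cover by at most five cylinders of comparable size, extract a finite subcover by compactness of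
the space of survivors, and count words of a common large length (`mass_le`,
`le_hausdorff_piece`).
-/

open MeasureTheory Filter

namespace Paper


/-- The set `Σ_k^ω` of admissible words of length `k`. -/
def SigmaSet (b m : ℕ) (ω : ℕ → Fin m → Fin b) (k : ℕ) : Set (Fin k → Fin b) :=
  { d | ∀ (i : ℕ) (hi : i + m ≤ k),
      (fun j : Fin m => d ⟨i + j.1, by have := j.isLt; omega⟩) ≠ ω i }

/-- The survivor set `K^ω ⊆ [0,1]`. -/
def Kset (b m : ℕ) (ω : ℕ → Fin m → Fin b) : Set ℝ :=
  { x | ∃ d : ℕ → Fin b,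
      (∀ k : ℕ, (fun j : Fin m => d (k + j.1)) ≠ ω k) ∧
      x = ∑' i : ℕ, ((d i : ℕ) : ℝ) / (b : ℝ) ^ (i + 1) }

open Classical in
/-- The adjacency matrix `A_d` of the subshift of finite type with forbidden word `d`. -/
noncomputable def adjMat (b m : ℕ) (d : Fin m → Fin b) :
    Matrix (Fin (m - 1) → Fin b) (Fin (m - 1) → Fin b) ℝ :=
  fun u v =>
    if ((∀ (i : ℕ) (h : i + 1 < m - 1), u ⟨i + 1, h⟩ = v ⟨i, by omega⟩) ∧
        ¬ ((∀ (j : ℕ) (h : j < m - 1), u ⟨j, h⟩ = d ⟨j, by omega⟩) ∧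
           (∀ (h2 : m - 2 < m - 1), v ⟨m - 2, h2⟩ = d ⟨m - 1, by omega⟩)))
    then 1 else 0

/-- The norm `‖M‖ = ∑_{i,j} |m_{ij}|` of a real square matrix. -/
noncomputable def matNorm {n : Type*} [Fintype n] (M : Matrix n n ℝ) : ℝ :=
  ∑ i, ∑ j, |M i j|

/-- The product `A_{ω^0} A_{ω^1} ⋯ A_{ω^{n-1}}`. -/
noncomputable def prodA (b m : ℕ) (ω : ℕ → Fin m → Fin b) (n : ℕ) :
    Matrix (Fin (m - 1) → Fin b) (Fin (m - 1) → Fin b) ℝ :=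
  ((List.range n).map (fun i => adjMat b m (ω i))).prod

/-- `ω` is progressively overlapping at position `k`. -/
def ProgOverlapAt (b m : ℕ) (ω : ℕ → Fin m → Fin b) (k : ℕ) : Prop :=
  ∀ j : ℕ, 1 ≤ j → j ≤ min k (m - 1) →
    ∀ (t : ℕ) (h : t + j < m),
      ω k ⟨t, by omega⟩ = ω (k - j) ⟨t + j, h⟩

/-- `ω` is totally distinct at position `k`. -/
def TotDistinctAt (b m : ℕ) (ω : ℕ → Fin m → Fin b) (k : ℕ) : Prop :=
  ∀ j : ℕ, 1 ≤ j → j ≤ min k (m - 1) →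
    ¬ (∀ (t : ℕ) (h : t + j < m),
        ω k ⟨t, by omega⟩ = ω (k - j) ⟨t + j, h⟩)

/-- A set `F ⊆ ℝ` is `s`-Ahlfors regular. -/
def AhlforsRegular (F : Set ℝ) (s : ℝ) : Prop :=
  ∃ c : ℝ, 1 ≤ c ∧ ∀ x ∈ F, ∀ r : ℝ, 0 < r → r < 1 →
    ENNReal.ofReal (c⁻¹ * r ^ s) ≤ Measure.hausdorffMeasure s (F ∩ Metric.closedBall x r) ∧
    Measure.hausdorffMeasure s (F ∩ Metric.closedBall x r) ≤ ENNReal.ofReal (c * r ^ s)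


/-- The space of infinite digit sequences all of whose windows avoid `ω`; the survivor set is
its image under the base-`b` expansion. -/
def Surv {b m : ℕ} (ω : ℕ → Fin m → Fin b) : Set (ℕ → Fin b) :=
  { d | ∀ k : ℕ, (fun j : Fin m => d (k + j.1)) ≠ ω k }

/-- The length-`n` prefixes of the survivors that agree with `d` on the first `k` digits. -/
def words {b m : ℕ} (ω : ℕ → Fin m → Fin b) (d : ℕ → Fin b) (k n : ℕ) :
    Set (Fin n → Fin b) :=
  (fun (e : ℕ → Fin b) (i : Fin n) => e i) '' (Surv ω ∩ { e | ∀ i < k, e i = d i })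

/-! ### Gluing survivors -/

/-- A sequence `z` whose `i`-th digit is neither the first letter of the forbidden word starting
at `i` nor the last letter of the forbidden word ending at `i`. Two letters are to be avoided, so
three digits suffice. -/
lemma exists_safe {b m : ℕ} (hb : 3 ≤ b) (hm : 2 ≤ m) (ω : ℕ → Fin m → Fin b) :
    ∃ z : ℕ → Fin b, (∀ i, z i ≠ ω i ⟨0, by omega⟩) ∧
      ∀ j, z (j + (m - 1)) ≠ ω j ⟨m - 1, by omega⟩ := by
  have h : ∀ i : ℕ, ∃ a : Fin b, a ≠ ω i ⟨0, by omega⟩ ∧ a ≠ ω (i - (m - 1)) ⟨m - 1, by omega⟩ := by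
    intro i
    have hc : ({ω i ⟨0, by omega⟩, ω (i - (m - 1)) ⟨m - 1, by omega⟩} : Finset (Fin b)).card <
        Fintype.card (Fin b) := by
      refine lt_of_le_of_lt Finset.card_le_two ?_
      simp only [Fintype.card_fin]; omega
    obtain ⟨a, ha⟩ := Finset.exists_mem_notMem_of_card_lt_card
      (s := ({ω i ⟨0, by omega⟩, ω (i - (m - 1)) ⟨m - 1, by omega⟩} : Finset (Fin b)))
      (t := Finset.univ) (by simpa using hc)
    refine ⟨a, ?_, ?_⟩
    · rintro rfl; simp at ha
    · rintro rfl; simp at ha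
  choose z hz1 hz2 using h
  refine ⟨z, hz1, fun j => ?_⟩
  have := hz2 (j + (m - 1))
  simpa using this

/-- A sequence admissible up to `k` and a survivor can be glued across a gap of `m - 1` digits filled by a safe
sequence: a window inside one of the two pieces is admissible already, and every other window
starts or ends in the gap. -/
lemma exchange {b m : ℕ} (hb : 3 ≤ b) (hm : 2 ≤ m) (ω : ℕ → Fin m → Fin b)
    {d e : ℕ → Fin b} (k : ℕ)
    (hd : ∀ i, i + m ≤ k → (fun j : Fin m => d (i + j.1)) ≠ ω i) (he : e ∈ Surv ω) :
    ∃ f ∈ Surv ω, (∀ i < k, f i = d i) ∧ ∀ i, k + (m - 1) ≤ i → f i = e i := by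
  obtain ⟨z, hz1, hz2⟩ := exists_safe hb hm ω
  refine ⟨fun i => if i < k then d i else if i < k + (m - 1) then z i else e i, ?_, ?_, ?_⟩
  · intro i hi
    have hj : ∀ j : Fin m, (if i + j.1 < k then d (i + j.1) else
        if i + j.1 < k + (m - 1) then z (i + j.1) else e (i + j.1)) = ω i j := congrFun hi
    by_cases h1 : i + m ≤ k
    · apply hd i h1
      ext1 j
      have := hj j
      rwa [if_pos (by omega)] at this
    by_cases h2 : k + (m - 1) ≤ i
    · apply he i
      ext1 j
      have := hj j
      rwa [if_neg (by omega), if_neg (by omega)] at this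
    by_cases h3 : i < k
    · have := hj ⟨m - 1, by omega⟩
      rw [if_neg (by simp only; omega), if_pos (by simp only; omega)] at this
      exact hz2 i this
    · have := hj ⟨0, by omega⟩
      rw [if_neg (by simp only; omega), if_pos (by simp only; omega)] at this
      exact hz1 i this
  · intro i hi
    simp [hi]
  · intro i hi
    simp only
    rw [if_neg (by omega), if_neg (by omega)]

lemma surv_nonempty {b m : ℕ} (hb : 3 ≤ b) (hm : 2 ≤ m) (ω : ℕ → Fin m → Fin b) :
    ∃ z, z ∈ Surv ω := by
  obtain ⟨z, hz, -⟩ := exists_safe hb hm ω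
  refine ⟨z, fun k hk => hz k ?_⟩
  simpa using congrFun hk ⟨0, by omega⟩

/-! ### Counting words -/

/-- Every admissible finite word extends to a survivor, so the admissible words of length `n` are
exactly the prefixes of survivors. -/
lemma words_zero {b m : ℕ} (hb : 3 ≤ b) (hm : 2 ≤ m) (ω : ℕ → Fin m → Fin b) (d : ℕ → Fin b)
    (n : ℕ) : words ω d 0 n = SigmaSet b m ω n := by
  obtain ⟨z, hz⟩ := surv_nonempty hb hm ω
  ext p
  constructor
  · rintro ⟨e, ⟨he, -⟩, rfl⟩ i hi h
    exact he i h
  · intro hp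
    obtain ⟨f, hf, hfp, -⟩ := exchange hb hm ω (d := fun i => if h : i < n then p ⟨i, h⟩ else z i)
      (e := z) n (by
        intro i hi h
        apply hp i hi
        rw [← h]
        ext1 j
        rw [dif_pos (by omega)]) hz
    refine ⟨f, ⟨hf, fun i hi => absurd hi (by omega)⟩, ?_⟩
    ext1 i
    simp only
    rw [hfp i i.2, dif_pos i.2]

/-- Gluing turns a word of length `n` into its prefix of length `k`, its `m - 1` digits after
position `k`, and a word continuing `d`; these three data determine it. -/
lemma card_words_le {b m : ℕ} (hb : 3 ≤ b) (hm : 2 ≤ m) (ω : ℕ → Fin m → Fin b)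
    {d : ℕ → Fin b} (hd : d ∈ Surv ω) (k n : ℕ) :
    Nat.card (words ω d 0 n) ≤
      Nat.card (words ω d 0 k) * b ^ (m - 1) * Nat.card (words ω d k n) := by
  have hch : ∀ p : words ω d 0 n, ∃ e, e ∈ Surv ω ∧ ∀ i : Fin n, e i = p.1 i := by
    rintro ⟨p, e, ⟨he, -⟩, rfl⟩
    exact ⟨e, he, fun _ => rfl⟩
  choose e he hep using hch
  choose f hf hfd hfe using fun p => exchange hb hm ω k (fun i _ => hd i) (he p)
  let F : words ω d 0 n → (words ω d 0 k × (Fin (m - 1) → Fin b)) × words ω d k n := fun p =>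
    ((⟨fun i => e p i, e p, ⟨he p, fun i hi => absurd hi (by omega)⟩, rfl⟩,
      fun i => e p (k + i)), ⟨fun i => f p i, f p, ⟨hf p, hfd p⟩, rfl⟩)
  have hF : Function.Injective F := by
    intro p q hpq
    have h1 : ∀ i : Fin k, e p i = e q i := fun i =>
      congrFun (congrArg (fun x => x.1.1.1) hpq) i
    have h2 : ∀ i : Fin (m - 1), e p (k + i) = e q (k + i) := fun i =>
      congrFun (congrArg (fun x => x.1.2) hpq) i
    have h3 : ∀ i : Fin n, f p i = f q i := fun i =>
      congrFun (congrArg (fun x => x.2.1) hpq) i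
    apply Subtype.ext
    ext1 i
    rw [← hep, ← hep]
    by_cases hi : i.1 < k
    · exact h1 ⟨i, hi⟩
    by_cases hi' : i.1 < k + (m - 1)
    · have := h2 ⟨i.1 - k, by omega⟩
      simpa [show k + (i.1 - k) = i.1 by omega] using this
    · rw [← hfe p i (by omega), ← hfe q i (by omega)]
      exact h3 i
  have := Nat.card_le_card_of_injective F hF
  simpa [Nat.card_prod] using this

/-- The reverse of `card_words_le`: a word of length `k` and a word of length `n` continuing `d`
are determined by the glued word and the `m - 1` digits lost in the gap. -/
lemma card_words_ge {b m : ℕ} (hb : 3 ≤ b) (hm : 2 ≤ m) (ω : ℕ → Fin m → Fin b)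
    {d : ℕ → Fin b} (k n : ℕ) (hkn : k ≤ n) :
    Nat.card (words ω d 0 k) * Nat.card (words ω d k n) ≤
      b ^ (m - 1) * Nat.card (words ω d 0 n) := by
  have hch : ∀ p : words ω d 0 k, ∃ e, e ∈ Surv ω ∧ ∀ i : Fin k, e i = p.1 i := by
    rintro ⟨p, e, ⟨he, -⟩, rfl⟩
    exact ⟨e, he, fun _ => rfl⟩
  choose e he hep using hch
  have hch' : ∀ p : words ω d k n, ∃ g, g ∈ Surv ω ∧ (∀ i < k, g i = d i) ∧
      ∀ i : Fin n, g i = p.1 i := by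
    rintro ⟨p, e, ⟨he, h⟩, rfl⟩
    exact ⟨e, he, h, fun _ => rfl⟩
  choose g hg hgd hgp using hch'
  choose f hf hfd hfe using fun (p : words ω d 0 k × words ω d k n) =>
    exchange hb hm ω k (fun i _ => he p.1 i) (hg p.2)
  let F : words ω d 0 k × words ω d k n → (Fin (m - 1) → Fin b) × words ω d 0 n := fun p =>
    (fun i => g p.2 (k + i), ⟨fun i => f p i, f p, ⟨hf p, fun i hi => absurd hi (by omega)⟩, rfl⟩)
  have hF : Function.Injective F := by
    intro p q hpq
    have h2 : ∀ i : Fin (m - 1), g p.2 (k + i) = g q.2 (k + i) := fun i =>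
      congrFun (congrArg (fun x => x.1) hpq) i
    have h3 : ∀ i : Fin n, f p i = f q i := fun i =>
      congrFun (congrArg (fun x => x.2.1) hpq) i
    refine Prod.ext (Subtype.ext ?_) (Subtype.ext ?_)
    · ext1 i
      rw [← hep, ← hep, ← hfd p i i.2, ← hfd q i i.2]
      exact h3 ⟨i, by omega⟩
    · ext1 i
      rw [← hgp, ← hgp]
      by_cases hi : i.1 < k
      · rw [hgd _ _ hi, hgd _ _ hi]
      by_cases hi' : i.1 < k + (m - 1)
      · have := h2 ⟨i.1 - k, by omega⟩
        simpa [show k + (i.1 - k) = i.1 by omega] using this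
      · rw [← hfe p i (by omega), ← hfe q i (by omega)]
        exact h3 i
  have := Nat.card_le_card_of_injective F hF
  simpa [Nat.card_prod] using this

/-- Uniformly over all cylinders, the number of continuations of length `n - k` is comparable
to `β ^ (n - k)`. -/
lemma card_words_bounds {b m : ℕ} (hb : 3 ≤ b) (hm : 2 ≤ m) (ω : ℕ → Fin m → Fin b)
    {β C : ℝ} (hβ : 1 < β) (hC : 1 < C)
    (hcard : ∀ k : ℕ, 1 ≤ k →
      C⁻¹ * β ^ k ≤ (Nat.card ↥(SigmaSet b m ω k) : ℝ) ∧
      (Nat.card ↥(SigmaSet b m ω k) : ℝ) ≤ C * β ^ k) :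
    ∃ B : ℝ, 1 ≤ B ∧ ∀ d ∈ Surv ω, ∀ k n : ℕ, k ≤ n →
      B⁻¹ * β ^ n ≤ Nat.card (words ω d k n) * β ^ k ∧
      Nat.card (words ω d k n) * β ^ k ≤ B * β ^ n := by
  have hbpos : (1 : ℝ) ≤ (b : ℝ) ^ (m - 1) := one_le_pow₀ (by exact_mod_cast (by omega : 1 ≤ b))
  have hC0 : 0 < C := by linarith
  have hβ0 : 0 < β := by linarith
  have hall : ∀ d : ℕ → Fin b, ∀ k : ℕ, β ^ k ≤ C * (Nat.card (words ω d 0 k) : ℝ) ∧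
      (Nat.card (words ω d 0 k) : ℝ) ≤ C * β ^ k := by
    intro d k
    rw [words_zero hb hm]
    rcases Nat.eq_zero_or_pos k with rfl | hk
    · have : SigmaSet b m ω 0 = Set.univ :=
        Set.eq_univ_of_forall fun p i hi => absurd hi (by omega)
      rw [this]
      simp [hC.le]
    · obtain ⟨h1, h2⟩ := hcard k hk
      refine ⟨?_, h2⟩
      rwa [inv_mul_le_iff₀ hC0] at h1
  refine ⟨C * C * (b : ℝ) ^ (m - 1), ?_, ?_⟩
  · nlinarith [mul_le_mul hC.le hC.le zero_le_one hC0.le]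
  intro d hd k n hkn
  have h1 : (Nat.card (words ω d 0 n) : ℝ) ≤
      Nat.card (words ω d 0 k) * (b : ℝ) ^ (m - 1) * Nat.card (words ω d k n) := by
    exact_mod_cast card_words_le hb hm ω hd k n
  have h2 : (Nat.card (words ω d 0 k) : ℝ) * Nat.card (words ω d k n) ≤
      (b : ℝ) ^ (m - 1) * Nat.card (words ω d 0 n) := by
    exact_mod_cast card_words_ge hb hm ω k n hkn
  obtain ⟨hk1, hk2⟩ := hall d k
  obtain ⟨hn1, hn2⟩ := hall d n
  set Q := (Nat.card (words ω d 0 k) : ℝ)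
  set T := (Nat.card (words ω d 0 n) : ℝ)
  set S := (Nat.card (words ω d k n) : ℝ)
  set P := (b : ℝ) ^ (m - 1)
  have hS : 0 ≤ S := Nat.cast_nonneg _
  constructor
  · rw [inv_mul_le_iff₀ (by positivity)]
    calc β ^ n ≤ C * T := hn1
      _ ≤ C * (Q * P * S) := by gcongr
      _ ≤ C * ((C * β ^ k) * P * S) := by gcongr
      _ = _ := by ring
  · calc S * β ^ k ≤ S * (C * Q) := by gcongr
      _ = C * (Q * S) := by ring
      _ ≤ C * (P * T) := by gcongr
      _ ≤ C * (P * (C * β ^ n)) := by gcongr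
      _ = _ := by ring

/-! ### Cylinders and intervals -/

/-- The integer with base-`b` digits `e 0, …, e (j - 1)`, leading digit first. -/
def codeInt {b : ℕ} (e : ℕ → Fin b) : ℕ → ℕ
  | 0 => 0
  | j + 1 => b * codeInt e j + (e j : ℕ)

lemma codeInt_inj {b : ℕ} (e f : ℕ → Fin b) (j : ℕ) (h : codeInt e j = codeInt f j) :
    ∀ i < j, e i = f i := by
  induction j with
  | zero => intro i hi; omega
  | succ j ih =>
    simp only [codeInt] at h
    have hb : 0 < b := (e j).pos
    have h1 : (e j : ℕ) = f j := by
      have := congrArg (· % b) h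
      simpa [Nat.mul_add_mod, Nat.mod_eq_of_lt] using this
    have h2 : codeInt e j = codeInt f j := by
      rw [h1] at h
      exact Nat.eq_of_mul_eq_mul_left hb (by omega)
    intro i hi
    rcases Nat.lt_succ_iff_lt_or_eq.1 hi with hi | rfl
    · exact ih h2 i hi
    · exact Fin.ext h1

lemma codeInt_add {b : ℕ} (e : ℕ → Fin b) (j : ℕ) :
    (b : ℝ) ^ j * Real.ofDigits e = codeInt e j + Real.ofDigits (fun i => e (i + j)) := by
  have hb : (b : ℝ) ≠ 0 := by exact_mod_cast (e 0).pos.ne'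
  have hs : ∀ j, (b : ℝ) ^ j * ∑ i ∈ Finset.range j, Real.ofDigitsTerm e i = codeInt e j := by
    intro j
    induction j with
    | zero => simp [codeInt]
    | succ j ih =>
      rw [Finset.sum_range_succ, mul_add, pow_succ', mul_assoc, ih, Real.ofDigitsTerm, codeInt]
      push_cast
      field_simp
      ring
  rw [Real.ofDigits_eq_sum_add_ofDigits e j, mul_add, hs, mul_inv_cancel_left₀ (pow_ne_zero _ hb)]

/-- Survivors whose expansions lie within `b ^ (-j)` of a given one fall into at most five
cylinders of level `j`: the integers given by their first `j` digits differ by at most `2`. -/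
lemma exists_five {b m : ℕ} (ω : ℕ → Fin m → Fin b) {e₀ : ℕ → Fin b} (he₀ : e₀ ∈ Surv ω) (j : ℕ) :
    ∃ g : Fin 5 → ℕ → Fin b, (∀ i, g i ∈ Surv ω) ∧
      ∀ e ∈ Surv ω, |Real.ofDigits e - Real.ofDigits e₀| ≤ ((b : ℝ) ^ j)⁻¹ →
        ∃ i, ∀ l < j, e l = g i l := by
  have h : ∀ i : Fin 5, ∃ g ∈ Surv ω, (∃ e ∈ Surv ω, codeInt e j + 2 = codeInt e₀ j + i.1) →
      codeInt g j + 2 = codeInt e₀ j + i.1 := by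
    intro i
    by_cases hi : ∃ e ∈ Surv ω, codeInt e j + 2 = codeInt e₀ j + i.1
    · obtain ⟨e, he, h⟩ := hi
      exact ⟨e, he, fun _ => h⟩
    · exact ⟨e₀, he₀, fun h => absurd h hi⟩
  choose g hg hgi using h
  refine ⟨g, hg, fun e he hee => ?_⟩
  have hb : (0 : ℝ) < b := by exact_mod_cast (e 0).pos
  have hp : (0 : ℝ) < (b : ℝ) ^ j := by positivity
  have h1 := codeInt_add e j
  have h2 := codeInt_add e₀ j
  have h3 : |(b : ℝ) ^ j * Real.ofDigits e - (b : ℝ) ^ j * Real.ofDigits e₀| ≤ 1 := by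
    rw [← mul_sub, abs_mul, abs_of_pos hp]
    calc _ ≤ (b : ℝ) ^ j * ((b : ℝ) ^ j)⁻¹ := by gcongr
      _ = 1 := mul_inv_cancel₀ hp.ne'
  rw [h1, h2, abs_le] at h3
  have t1 := Real.ofDigits_nonneg (fun i => e (i + j))
  have t2 := Real.ofDigits_le_one (fun i => e (i + j))
  have t3 := Real.ofDigits_nonneg (fun i => e₀ (i + j))
  have t4 := Real.ofDigits_le_one (fun i => e₀ (i + j))
  have u1 : (codeInt e j : ℝ) ≤ codeInt e₀ j + 2 := by linarith [h3.2]
  have u2 : (codeInt e₀ j : ℝ) ≤ codeInt e j + 2 := by linarith [h3.1]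
  have v1 : codeInt e j ≤ codeInt e₀ j + 2 := by exact_mod_cast u1
  have v2 : codeInt e₀ j ≤ codeInt e j + 2 := by exact_mod_cast u2
  let i : Fin 5 := ⟨codeInt e j + 2 - codeInt e₀ j, by omega⟩
  have hi : codeInt e j + 2 = codeInt e₀ j + i.1 := by simp only [i]; omega
  have := hgi i ⟨e, he, hi⟩
  exact ⟨i, codeInt_inj e (g i) j (by omega)⟩

/-- The part of the survivor set whose expansions start with the first `k` digits of `d`. -/
def piece {b m : ℕ} (ω : ℕ → Fin m → Fin b) (d : ℕ → Fin b) (k : ℕ) : Set ℝ :=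
  Real.ofDigits '' (Surv ω ∩ { e | ∀ i < k, e i = d i })

lemma Kset_eq {b m : ℕ} (ω : ℕ → Fin m → Fin b) : Kset b m ω = Real.ofDigits '' Surv ω := by
  ext x
  simp only [Kset, Surv, Real.ofDigits, Real.ofDigitsTerm, Set.mem_image, Set.mem_ofPred_eq,
    div_eq_mul_inv, eq_comm (a := x)]

lemma ediam_piece_le {b m : ℕ} (ω : ℕ → Fin m → Fin b) (d : ℕ → Fin b) (k : ℕ) :
    Metric.ediam (piece ω d k) ≤ ENNReal.ofReal (((b : ℝ)⁻¹) ^ k) := by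
  refine Metric.ediam_le ?_
  rintro _ ⟨e, ⟨-, he⟩, rfl⟩ _ ⟨f, ⟨-, hf⟩, rfl⟩
  rw [edist_dist, Real.dist_eq]
  apply ENNReal.ofReal_le_ofReal
  rw [inv_pow]
  exact Real.abs_ofDigits_sub_ofDigits_le fun i hi => (he i hi).trans (hf i hi).symm

lemma pow_rpow {b : ℕ} {β s : ℝ} (hb : 0 < b) (hs : (b : ℝ) ^ s = β) (k : ℕ) :
    (((b : ℝ)⁻¹) ^ k) ^ s = (β⁻¹) ^ k := by
  rw [← Real.rpow_natCast, ← Real.rpow_mul (by positivity), mul_comm, Real.rpow_mul (by positivity),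
    Real.rpow_natCast, Real.inv_rpow (by positivity), hs]

/-- Covering a cylinder of level `k` by its subcylinders of level `n` and letting `n → ∞`. -/
lemma hausdorff_piece_le {b m : ℕ} (hb : 3 ≤ b) (ω : ℕ → Fin m → Fin b) {β s B : ℝ}
    (hβ : 1 < β) (hs : (b : ℝ) ^ s = β) (hs0 : 0 < s) (d : ℕ → Fin b) (k : ℕ)
    (hB : ∀ n : ℕ, k ≤ n → Nat.card (words ω d k n) * β ^ k ≤ B * β ^ n) :
    Measure.hausdorffMeasure s (piece ω d k) ≤ ENNReal.ofReal (B * (β⁻¹) ^ k) := by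
  have hβ0 : 0 < β := by linarith
  have hch : ∀ n, ∀ p : words ω d k n, ∃ e : ℕ → Fin b, ∀ i : Fin n, e i = p.1 i := by
    rintro n ⟨p, e, -, rfl⟩
    exact ⟨e, fun _ => rfl⟩
  choose e he using hch
  have hb1 : (b : ℝ)⁻¹ < 1 := inv_lt_one_of_one_lt₀ (by exact_mod_cast (by omega : 1 < b))
  have : ∀ n, Fintype (words ω d k n) := fun n => Fintype.ofFinite _
  have hr : Tendsto (fun n : ℕ => ENNReal.ofReal (((b : ℝ)⁻¹) ^ n)) atTop (nhds 0) := by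
    rw [← ENNReal.ofReal_zero]
    exact ENNReal.tendsto_ofReal (tendsto_pow_atTop_nhds_zero_of_lt_one (by positivity) hb1)
  refine (Measure.hausdorffMeasure_le_liminf_sum (ι := fun n => words ω d k n) s (piece ω d k)
    (l := atTop) _ hr (fun n p => piece ω (e n p) n) ?_ ?_).trans ?_
  · exact Eventually.of_forall fun n p => ediam_piece_le ω _ n
  · refine Eventually.of_forall fun n => ?_
    rintro _ ⟨f, ⟨hf, hfd⟩, rfl⟩
    refine Set.mem_iUnion.2 ⟨⟨fun i => f i, f, ⟨hf, hfd⟩, rfl⟩, f, ⟨hf, fun i hi => ?_⟩, rfl⟩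
    exact (he n ⟨fun i => f i, f, ⟨hf, hfd⟩, rfl⟩ ⟨i, hi⟩).symm
  · refine liminf_le_of_frequently_le' (Eventually.frequently ?_)
    filter_upwards [eventually_ge_atTop k] with n hn
    calc ∑ p : words ω d k n, Metric.ediam (piece ω (e n p) n) ^ s
        ≤ ∑ p : words ω d k n, ENNReal.ofReal ((β⁻¹) ^ n) := by
          refine Finset.sum_le_sum fun p _ => ?_
          rw [← pow_rpow (by omega) hs, ← ENNReal.ofReal_rpow_of_nonneg (by positivity) hs0.le]
          exact ENNReal.rpow_le_rpow (ediam_piece_le ω _ n) hs0.le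
      _ = ENNReal.ofReal (Nat.card (words ω d k n) * (β⁻¹) ^ n) := by
          rw [Finset.sum_const, nsmul_eq_mul, ENNReal.ofReal_mul (by positivity),
            ENNReal.ofReal_natCast, Finset.card_univ, Nat.card_eq_fintype_card]
      _ ≤ ENNReal.ofReal (B * (β⁻¹) ^ k) := by
          apply ENNReal.ofReal_le_ofReal
          have := hB n hn
          rw [inv_pow, inv_pow, ← div_eq_mul_inv, ← div_eq_mul_inv,
            div_le_div_iff₀ (by positivity) (by positivity)]
          exact this

/-- If finitely many cylinders of levels `J i` cover a cylinder of level `k`, their masses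
`β ^ (-J i)` add up to at least a constant times `β ^ (-k)`: count words of a common large
length. -/
lemma mass_le {b m : ℕ} (ω : ℕ → Fin m → Fin b) {β B : ℝ} (hβ : 1 < β) (hB1 : 1 ≤ B)
    (hB : ∀ d ∈ Surv ω, ∀ k n : ℕ, k ≤ n →
      B⁻¹ * β ^ n ≤ Nat.card (words ω d k n) * β ^ k ∧
      Nat.card (words ω d k n) * β ^ k ≤ B * β ^ n)
    {d : ℕ → Fin b} (hd : d ∈ Surv ω) (k : ℕ) {ι : Type*} (T : Finset ι) (J : ι → ℕ)
    (g : ι → ℕ → Fin b) (hg : ∀ i, g i ∈ Surv ω)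
    (hcov : ∀ e ∈ Surv ω, (∀ l < k, e l = d l) → ∃ i ∈ T, ∀ l < J i, e l = g i l) :
    (B * B)⁻¹ * (β⁻¹) ^ k ≤ ∑ i ∈ T, (β⁻¹) ^ (J i) := by
  have hβ0 : 0 < β := by linarith
  set n := k + T.sup J with hn
  have hJ : ∀ i ∈ T, J i ≤ n := fun i hi => (Finset.le_sup hi).trans (Nat.le_add_left _ _)
  have hsub : words ω d k n ⊆ ⋃ i ∈ T, words ω (g i) (J i) n := by
    rintro _ ⟨e, ⟨he, hed⟩, rfl⟩
    obtain ⟨i, hi, h⟩ := hcov e he hed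
    exact Set.mem_biUnion hi ⟨e, ⟨he, h⟩, rfl⟩
  have hcard : (Nat.card (words ω d k n) : ℝ) ≤ ∑ i ∈ T, (Nat.card (words ω (g i) (J i) n) : ℝ) := by
    have h1 : (words ω d k n).ncard ≤ ∑ i ∈ T, (words ω (g i) (J i) n).ncard :=
      (Set.ncard_le_ncard hsub (Set.toFinite _)).trans (Finset.set_ncard_biUnion_le _ _)
    simp only [← Nat.card_coe_set_eq] at h1
    exact_mod_cast h1
  have hB0 : 0 < B := by linarith
  have hlow := (hB d hd k n (Nat.le_add_right _ _)).1
  have hup : ∀ i ∈ T, (Nat.card (words ω (g i) (J i) n) : ℝ) ≤ B * β ^ n * (β⁻¹) ^ (J i) := by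
    intro i hi
    have := (hB _ (hg i) (J i) n (hJ i hi)).2
    rw [inv_pow, ← div_eq_mul_inv, le_div_iff₀ (by positivity)]
    exact this
  have h2 : (Nat.card (words ω d k n) : ℝ) ≤ B * β ^ n * ∑ i ∈ T, (β⁻¹) ^ (J i) := by
    rw [Finset.mul_sum]
    exact hcard.trans (Finset.sum_le_sum hup)
  have h3 : B⁻¹ * β ^ n ≤ B * β ^ n * (∑ i ∈ T, (β⁻¹) ^ (J i)) * β ^ k :=
    hlow.trans (by gcongr)
  rw [inv_mul_le_iff₀ hB0] at h3
  rw [inv_mul_le_iff₀ (by positivity), inv_pow, inv_le_iff_one_le_mul₀ (by positivity)]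
  have hpn : 0 < β ^ n := by positivity
  refine le_of_mul_le_mul_left ?_ hpn
  linarith

/-- The level at which to replace a set of diameter `δ` by cylinders; the error `ε` is only needed
when `δ = 0`. -/
lemma exists_level {b : ℕ} (hb : 3 ≤ b) {β s : ℝ} (hβ : 1 < β) (hs : (b : ℝ) ^ s = β)
    (hs0 : 0 < s) {δ ε : ENNReal} (hδ : δ ≤ 1) (hε : 0 < ε) :
    ∃ j : ℕ, δ ≤ ENNReal.ofReal (((b : ℝ)⁻¹) ^ j) ∧
      ENNReal.ofReal ((β⁻¹) ^ j) ≤ ENNReal.ofReal β * δ ^ s + ε := by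
  have hβ0 : 0 < β := by linarith
  have hb0 : (0 : ℝ) < (b : ℝ)⁻¹ := by
    have : 0 < b := by omega
    positivity
  have hb1 : (b : ℝ)⁻¹ < 1 := inv_lt_one_of_one_lt₀ (by exact_mod_cast (by omega : 1 < b))
  rcases eq_or_ne δ 0 with rfl | h0
  · have hr : Tendsto (fun n : ℕ => ENNReal.ofReal ((β⁻¹) ^ n)) atTop (nhds 0) := by
      rw [← ENNReal.ofReal_zero]
      exact ENNReal.tendsto_ofReal (tendsto_pow_atTop_nhds_zero_of_lt_one (by positivity)
        (inv_lt_one_of_one_lt₀ hβ))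
    obtain ⟨j, hj⟩ := (hr.eventually (gt_mem_nhds hε)).exists
    exact ⟨j, by simp, hj.le.trans le_add_self⟩
  · lift δ to NNReal using (hδ.trans_lt ENNReal.one_lt_top).ne
    have hδ0 : (0 : ℝ) < δ := by
      have : δ ≠ 0 := by simpa using h0
      positivity
    have hδ1 : (δ : ℝ) ≤ 1 := by exact_mod_cast hδ
    obtain ⟨j, hj1, hj2⟩ := exists_nat_pow_near_of_lt_one hδ0 hδ1 hb0 hb1
    have hcoe : (δ : ENNReal) = ENNReal.ofReal (δ : ℝ) := by simp
    refine ⟨j, ?_, le_add_right ?_⟩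
    · rw [hcoe]
      exact ENNReal.ofReal_le_ofReal hj2
    · rw [hcoe, ENNReal.ofReal_rpow_of_nonneg hδ0.le hs0.le, ← ENNReal.ofReal_mul hβ0.le]
      apply ENNReal.ofReal_le_ofReal
      have := Real.rpow_le_rpow (by positivity) hj1.le hs0.le
      rw [pow_rpow (by omega) hs, pow_succ', inv_mul_le_iff₀ hβ0] at this
      exact this

lemma isCompact_cyl {b m : ℕ} (ω : ℕ → Fin m → Fin b) (d : ℕ → Fin b) (k : ℕ) :
    IsCompact (Surv ω ∩ { e | ∀ i < k, e i = d i }) := by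
  apply IsClosed.isCompact
  apply IsClosed.inter
  · rw [Surv, Set.ofPred_forall]
    refine isClosed_iInter fun i => ?_
    have hc : Continuous fun (d : ℕ → Fin b) (j : Fin m) => d (i + j.1) := by fun_prop
    exact (isClosed_discrete ({ω i}ᶜ : Set (Fin m → Fin b))).preimage hc
  · simp only [Set.ofPred_forall]
    refine isClosed_iInter fun i => isClosed_iInter fun _ => ?_
    exact isClosed_eq (continuous_apply i) continuous_const

lemma isOpen_cyl {b : ℕ} (d : ℕ → Fin b) (k : ℕ) :
    IsOpen { e : ℕ → Fin b | ∀ i < k, e i = d i } := by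
  have : { e : ℕ → Fin b | ∀ i < k, e i = d i } =
      ⋂ i ∈ Finset.range k, (fun e : ℕ → Fin b => e i) ⁻¹' {d i} := by
    ext e; simp
  rw [this]
  exact isOpen_biInter_finset fun i _ => (isOpen_discrete _).preimage (continuous_apply i)

/-- The mass bound passes from finite covers by cylinders to arbitrary countable covers, by
compactness of the space of survivors. -/
lemma le_hausdorff_piece {b m : ℕ} (hb : 3 ≤ b) (ω : ℕ → Fin m → Fin b) {β s B : ℝ}
    (hβ : 1 < β) (hs : (b : ℝ) ^ s = β) (hs0 : 0 < s) (hB1 : 1 ≤ B)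
    (hB : ∀ d ∈ Surv ω, ∀ k n : ℕ, k ≤ n →
      B⁻¹ * β ^ n ≤ Nat.card (words ω d k n) * β ^ k ∧
      Nat.card (words ω d k n) * β ^ k ≤ B * β ^ n)
    {d : ℕ → Fin b} (hd : d ∈ Surv ω) (k : ℕ) :
    ENNReal.ofReal ((B * B)⁻¹ * (β⁻¹) ^ k) ≤
      ENNReal.ofReal (5 * β) * Measure.hausdorffMeasure s (piece ω d k) := by
  have hβ0 : 0 < β := by linarith
  -- It suffices to bound the sum over a cover `t` by sets of diameter at most `1`.
  suffices h : ∀ t : ℕ → Set ℝ, piece ω d k ⊆ ⋃ n, t n → (∀ n, Metric.ediam (t n) ≤ 1) →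
      ENNReal.ofReal ((B * B)⁻¹ * (β⁻¹) ^ k) ≤
        ENNReal.ofReal (5 * β) * ∑' n, Metric.ediam (t n) ^ s by
    rw [mul_comm (ENNReal.ofReal (5 * β)), ← ENNReal.div_le_iff (by simpa using hβ0) ENNReal.ofReal_ne_top]
    rw [Measure.hausdorffMeasure_apply]
    refine le_trans ?_ (le_iSup₂ (1 : ENNReal) zero_lt_one)
    refine le_iInf fun t => le_iInf fun ht => le_iInf fun ht1 => ?_
    rw [ENNReal.div_le_iff (by simpa using hβ0) ENNReal.ofReal_ne_top,
      mul_comm (∑' n, _)]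
    refine (h t ht ht1).trans ?_
    gcongr with n
    rcases Set.eq_empty_or_nonempty (t n) with hn | hn
    · simp [hn, hs0]
    · exact le_iSup (fun _ : (t n).Nonempty => Metric.ediam (t n) ^ s) hn
  intro t ht ht1
  refine ENNReal.le_of_forall_pos_le_add fun ε hε _ => ?_
  obtain ⟨ε', hε', hsum⟩ := ENNReal.exists_pos_sum_of_countable'
    (ε := (ε : ENNReal) / 5) (by simpa using hε.ne') ℕ
  choose J hJ1 hJ2 using fun n => exists_level hb hβ hs hs0 (ht1 n) (hε' n)
  have hgex : ∀ n, ∃ g : Fin 5 → ℕ → Fin b, (∀ i, g i ∈ Surv ω) ∧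
      ∀ e ∈ Surv ω, Real.ofDigits e ∈ t n → ∃ i, ∀ l < J n, e l = g i l := by
    intro n
    by_cases hn : ∃ e₀ ∈ Surv ω, Real.ofDigits e₀ ∈ t n
    · obtain ⟨e₀, he₀, hen⟩ := hn
      obtain ⟨g, hg, h⟩ := exists_five ω he₀ (J n)
      refine ⟨g, hg, fun e he het => h e he ?_⟩
      have h1 := (Metric.edist_le_ediam_of_mem het hen).trans (hJ1 n)
      rw [edist_dist, ENNReal.ofReal_le_ofReal_iff (by positivity), Real.dist_eq, inv_pow] at h1
      exact h1
    · exact ⟨fun _ => d, fun _ => hd, fun e he het => absurd ⟨e, he, het⟩ hn⟩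
  choose g hg hgc using hgex
  obtain ⟨T, hT⟩ := (isCompact_cyl ω d k).elim_finite_subcover
    (fun p : ℕ × Fin 5 => { e : ℕ → Fin b | ∀ l < J p.1, e l = g p.1 p.2 l })
    (fun p => isOpen_cyl _ _) (by
      intro e he
      obtain ⟨n, hn⟩ := Set.mem_iUnion.1 (ht ⟨e, he, rfl⟩)
      obtain ⟨i, hi⟩ := hgc n e he.1 hn
      exact Set.mem_iUnion.2 ⟨(n, i), hi⟩)
  have hmass := mass_le ω hβ hB1 hB hd k T (fun p => J p.1) (fun p => g p.1 p.2)
    (fun p => hg p.1 p.2) (by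
      intro e he hed
      obtain ⟨p, hp, hpe⟩ := Set.mem_iUnion₂.1 (hT ⟨he, hed⟩)
      exact ⟨p, hp, hpe⟩)
  calc ENNReal.ofReal ((B * B)⁻¹ * (β⁻¹) ^ k)
      ≤ ENNReal.ofReal (∑ p ∈ T, (β⁻¹) ^ (J p.1)) := ENNReal.ofReal_le_ofReal hmass
    _ = ∑ p ∈ T, ENNReal.ofReal ((β⁻¹) ^ (J p.1)) :=
        ENNReal.ofReal_sum_of_nonneg fun _ _ => by positivity
    _ ≤ ∑' p : ℕ × Fin 5, ENNReal.ofReal ((β⁻¹) ^ (J p.1)) := ENNReal.sum_le_tsum T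
    _ = ∑' n : ℕ, 5 * ENNReal.ofReal ((β⁻¹) ^ (J n)) := by
        rw [ENNReal.tsum_prod']
        simp
    _ = 5 * ∑' n : ℕ, ENNReal.ofReal ((β⁻¹) ^ (J n)) := ENNReal.tsum_mul_left
    _ ≤ 5 * ∑' n : ℕ, (ENNReal.ofReal β * Metric.ediam (t n) ^ s + ε' n) := by
        gcongr with n
        exact hJ2 n
    _ = 5 * (ENNReal.ofReal β * ∑' n, Metric.ediam (t n) ^ s + ∑' n, ε' n) := by
        rw [ENNReal.tsum_add, ENNReal.tsum_mul_left]
    _ ≤ 5 * (ENNReal.ofReal β * ∑' n, Metric.ediam (t n) ^ s + ε / 5) := by gcongr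
    _ = ENNReal.ofReal (5 * β) * ∑' n, Metric.ediam (t n) ^ s + ε := by
        rw [mul_add, ENNReal.mul_div_cancel (by simp) (by simp), ENNReal.ofReal_mul (by norm_num),
          mul_assoc]
        simp

/-- **Proposition 3.1.** If `C⁻¹ β^k ≤ |Σ_k^ω| ≤ C β^k` for all `k`, then `K^ω`
is `(log β / log b)`-Ahlfors regular. -/
theorem ahlfors_regular_of_card_bounds (b m : ℕ) (hb : 3 ≤ b) (hm : 2 ≤ m)
    (ω : ℕ → Fin m → Fin b) (β C : ℝ) (hβ : 1 < β) (hC : 1 < C)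
    (hcard : ∀ k : ℕ, 1 ≤ k →
      C⁻¹ * β ^ k ≤ (Nat.card ↥(SigmaSet b m ω k) : ℝ) ∧
      (Nat.card ↥(SigmaSet b m ω k) : ℝ) ≤ C * β ^ k) :
    AhlforsRegular (Kset b m ω) (Real.log β / Real.log b) := by
  obtain ⟨B, hB1, hB⟩ := card_words_bounds hb hm ω hβ hC hcard
  have hβ0 : 0 < β := by linarith
  have hbR : (1 : ℝ) < b := by exact_mod_cast (by omega : 1 < b)
  have hs0 : 0 < Real.log β / Real.log b := div_pos (Real.log_pos hβ) (Real.log_pos hbR)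
  have hs : (b : ℝ) ^ (Real.log β / Real.log b) = β := by
    rw [Real.log_div_log]
    exact Real.rpow_logb (by linarith) hbR.ne' hβ0
  generalize Real.log β / Real.log b = s at hs0 hs ⊢
  have hb0 : (0 : ℝ) < (b : ℝ)⁻¹ := by positivity
  have hb1 : (b : ℝ)⁻¹ < 1 := inv_lt_one_of_one_lt₀ hbR
  have hB0 : 0 < B := by linarith
  refine ⟨5 * β * β * (B * B), ?_, ?_⟩
  · have h1 : 1 ≤ β * β := by nlinarith
    have h2 : 1 ≤ B * B := by nlinarith
    nlinarith [mul_le_mul h1 h2 zero_le_one (by positivity)]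
  rw [Kset_eq]
  rintro _ ⟨d, hd, rfl⟩ r hr0 hr1
  obtain ⟨k, hk1, hk2⟩ := exists_nat_pow_near_of_lt_one hr0 hr1.le hb0 hb1
  have hrk1 : (β⁻¹) ^ (k + 1) ≤ r ^ s := by
    rw [← pow_rpow (by omega) hs]
    exact Real.rpow_le_rpow (by positivity) hk1.le hs0.le
  have hrk2 : r ^ s ≤ (β⁻¹) ^ k := by
    rw [← pow_rpow (by omega) hs]
    exact Real.rpow_le_rpow hr0.le hk2 hs0.le
  constructor
  · have hsub : piece ω d (k + 1) ⊆
        Real.ofDigits '' Surv ω ∩ Metric.closedBall (Real.ofDigits d) r := by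
      rintro _ ⟨e, ⟨he, hed⟩, rfl⟩
      refine ⟨⟨e, he, rfl⟩, ?_⟩
      rw [Metric.mem_closedBall, Real.dist_eq]
      refine (Real.abs_ofDigits_sub_ofDigits_le hed).trans ?_
      rw [← inv_pow]
      exact hk1.le
    refine le_trans ?_ (measure_mono hsub)
    have h := le_hausdorff_piece hb ω hβ hs hs0 hB1 hB hd (k + 1)
    rw [mul_comm (ENNReal.ofReal (5 * β)), ← ENNReal.div_le_iff (by simpa using hβ0) ENNReal.ofReal_ne_top,
      ← ENNReal.ofReal_div_of_pos (by positivity)] at h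
    refine le_trans (ENNReal.ofReal_le_ofReal ?_) h
    calc (5 * β * β * (B * B))⁻¹ * r ^ s ≤ (5 * β * β * (B * B))⁻¹ * (β⁻¹) ^ k := by gcongr
      _ = (B * B)⁻¹ * (β⁻¹) ^ (k + 1) / (5 * β) := by
        rw [pow_succ]
        field_simp
  · obtain ⟨g, hg, hgc⟩ := exists_five ω hd k
    have hsub : Real.ofDigits '' Surv ω ∩ Metric.closedBall (Real.ofDigits d) r ⊆
        ⋃ i, piece ω (g i) k := by
      rintro _ ⟨⟨e, he, rfl⟩, her⟩
      rw [Metric.mem_closedBall, Real.dist_eq] at her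
      obtain ⟨i, hi⟩ := hgc e he (by rw [← inv_pow]; exact her.trans hk2)
      exact Set.mem_iUnion.2 ⟨i, e, ⟨he, hi⟩, rfl⟩
    calc Measure.hausdorffMeasure s (Real.ofDigits '' Surv ω ∩ Metric.closedBall (Real.ofDigits d) r)
        ≤ Measure.hausdorffMeasure s (⋃ i, piece ω (g i) k) := measure_mono hsub
      _ ≤ ∑ i, Measure.hausdorffMeasure s (piece ω (g i) k) := measure_iUnion_fintype_le _ _
      _ ≤ ∑ i : Fin 5, ENNReal.ofReal (B * (β⁻¹) ^ k) := Finset.sum_le_sum fun i _ =>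
          hausdorff_piece_le hb ω hβ hs hs0 (g i) k fun n hn => (hB _ (hg i) k n hn).2
      _ = ENNReal.ofReal (5 * (B * (β⁻¹) ^ k)) := by
          rw [ENNReal.ofReal_mul (by norm_num : (0 : ℝ) ≤ 5), Finset.sum_const, nsmul_eq_mul]
          simp only [Finset.card_univ, Fintype.card_fin, Nat.cast_ofNat, ENNReal.ofReal_ofNat]
      _ ≤ ENNReal.ofReal (5 * β * β * (B * B) * r ^ s) := by
          apply ENNReal.ofReal_le_ofReal
          have h1 : (β⁻¹) ^ k ≤ β * r ^ s := by
            rw [pow_succ', inv_mul_le_iff₀ hβ0] at hrk1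
            exact hrk1
          have h2 : B ≤ β * (B * B) := by nlinarith [mul_pos hB0 hB0]
          calc 5 * (B * (β⁻¹) ^ k) ≤ 5 * ((β * (B * B)) * (β * r ^ s)) := by gcongr
            _ = _ := by ring

end Paper
end

section
/- Suppose b ≥ 3 and m ≥ 10. For any two sequences ω = ω^0ω^1…, τ = τ^0τ^1… ∈ (D_b^m)^{ℕ₀}, the two-hole survivor set K^{ω,τ} = {∑_{i=1}^∞ d_i b^{−i} : (d_i)_{i≥1} ∈ D_b^ℕ and d_{k+1}d_{k+2}…d_{k+m} ∉ {ω^k, τ^k} for all k ≥ 0} has Hausdorff dimension at least 1 − (2/(m−2))·(log m / log b + 1). -/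
/-!
Let `L` be the integer part of `(m+1)/2` and cut digit sequences into consecutive blocks of length
`L`. Every window of length `m ≥ 2L-1` contains a full block, so it suffices to refuse in each
block the at most `2L` restrictions of the forbidden words whose windows first meet a full block
there (`window_ne`). Refusing the zero word as well still leaves at least
`b^L - 2L - 1 ≥ b^(L-1)` words (`exists_code`).

Choose `b^(L-1)` words in each block and code a sequence of base-`b^(L-1)` digits by them. As no
block is zero, two coded reals that first differ in block `n` are at least `b^(-(n+2)L)` apart
(`abs_sub_ofDigits_ge`), while the reals with the original digits differ by at most `b^(-n(L-1))`.
Decoding is thus a Hölder map of exponent `(L-1)/L` from a subset of the survivor set onto `[0,1]`,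
so the survivor set has dimension at least `1 - 1/L` (`le_dimH_range_blockSeq`). This beats the
required bound, because `1/L ≤ 2/m`.
-/

open MeasureTheory Filter

namespace Paper

/-- The two-hole survivor set `K^{ω,τ}`. -/
def Kset2 (b m : ℕ) (ω τ : ℕ → Fin m → Fin b) : Set ℝ :=
  { x | ∃ d : ℕ → Fin b,
      (∀ k : ℕ, (fun j : Fin m => d (k + j.1)) ≠ ω k ∧
        (fun j : Fin m => d (k + j.1)) ≠ τ k) ∧
      x = ∑' i : ℕ, ((d i : ℕ) : ℝ) / (b : ℝ) ^ (i + 1) }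

/-! ### Separation of base-`b` expansions -/

open Real in
/-- If `u < v` at their first difference `p`, a nonzero digit of `v` at a later place `q` keeps the
two expansions apart: it excludes the near-coincidence of `…a(b-1)(b-1)…` with `…(a+1)00…`. -/
lemma sub_ofDigits_ge {b : ℕ} {u v : ℕ → Fin b} {p q : ℕ} (hpq : p < q)
    (heq : ∀ i < p, u i = v i) (hlt : u p < v p) (hq : (v q : ℕ) ≠ 0) :
    ((b : ℝ) ^ (q + 1))⁻¹ ≤ ofDigits v - ofDigits u := by
  have hb : 0 < b := (u 0).pos
  have hb' : (0 : ℝ) < b := by exact_mod_cast hb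
  rw [ofDigits_eq_sum_add_ofDigits u (p + 1), ofDigits_eq_sum_add_ofDigits v (p + 1),
    Finset.sum_range_succ, Finset.sum_range_succ]
  have hs : ∑ i ∈ Finset.range p, ofDigitsTerm u i = ∑ i ∈ Finset.range p, ofDigitsTerm v i :=
    Finset.sum_congr rfl fun i hi ↦ by simp [ofDigitsTerm, heq i (Finset.mem_range.mp hi)]
  have hp : ofDigitsTerm u p + ((b : ℝ) ^ (p + 1))⁻¹ ≤ ofDigitsTerm v p := by
    have h1 : ((u p : ℕ) : ℝ) + 1 ≤ ((v p : ℕ) : ℝ) := by exact_mod_cast hlt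
    have := mul_le_mul_of_nonneg_right h1 (by positivity : (0 : ℝ) ≤ ((b : ℝ) ^ (p + 1))⁻¹)
    simp only [ofDigitsTerm]
    linarith
  have hu : ((b : ℝ) ^ (p + 1))⁻¹ * ofDigits (fun i ↦ u (i + (p + 1))) ≤ ((b : ℝ) ^ (p + 1))⁻¹ :=
    mul_le_of_le_one_right (by positivity) (ofDigits_le_one _)
  have hv : ((b : ℝ) ^ (q + 1))⁻¹
      ≤ ((b : ℝ) ^ (p + 1))⁻¹ * ofDigits (fun i ↦ v (i + (p + 1))) := by
    obtain ⟨c, rfl⟩ := Nat.exists_eq_add_of_lt hpq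
    have h1 : ofDigitsTerm (fun i ↦ v (i + (p + 1))) c ≤ ofDigits (fun i ↦ v (i + (p + 1))) :=
      summable_ofDigitsTerm.le_tsum c fun _ _ ↦ ofDigitsTerm_nonneg
    have h2 : (1 : ℝ) ≤ ((v (c + (p + 1)) : ℕ) : ℝ) := by
      rw [show c + (p + 1) = p + c + 1 by ring]
      exact_mod_cast Nat.one_le_iff_ne_zero.mpr hq
    have h3 : ((b : ℝ) ^ (c + 1))⁻¹ ≤ ofDigitsTerm (fun i ↦ v (i + (p + 1))) c :=
      le_mul_of_one_le_left (by positivity) h2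
    calc ((b : ℝ) ^ (p + c + 1 + 1))⁻¹ = ((b : ℝ) ^ (p + 1))⁻¹ * ((b : ℝ) ^ (c + 1))⁻¹ := by
          rw [← mul_inv, ← pow_add]; congr 2; ring
      _ ≤ _ := mul_le_mul_of_nonneg_left (h3.trans h1) (by positivity)
  linarith

open Real in
lemma abs_sub_ofDigits_ge {b : ℕ} {u v : ℕ → Fin b} {M N : ℕ} (hne : ∃ p < M, u p ≠ v p)
    (hu : ∃ q, M ≤ q ∧ q < N ∧ (u q : ℕ) ≠ 0) (hv : ∃ q, M ≤ q ∧ q < N ∧ (v q : ℕ) ≠ 0) :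
    ((b : ℝ) ^ N)⁻¹ ≤ |ofDigits u - ofDigits v| := by
  classical
  have hb : 1 ≤ b := (u 0).pos
  have hb' : (1 : ℝ) ≤ b := by exact_mod_cast hb
  have hex : ∃ p, u p ≠ v p := let ⟨p, _, h⟩ := hne; ⟨p, h⟩
  have hM : Nat.find hex < M := by
    obtain ⟨p, hp, h⟩ := hne
    exact (Nat.find_min' hex h).trans_lt hp
  have hmin : ∀ i < Nat.find hex, u i = v i := fun i hi ↦ not_not.mp (Nat.find_min hex hi)
  have mono : ∀ q < N, ((b : ℝ) ^ N)⁻¹ ≤ ((b : ℝ) ^ (q + 1))⁻¹ := fun q hq ↦ by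
    have : (b : ℝ) ^ (q + 1) ≤ (b : ℝ) ^ N := pow_le_pow_right₀ hb' hq
    gcongr
  rcases lt_or_gt_of_ne (Nat.find_spec hex) with h | h
  · obtain ⟨q, h1, h2, h3⟩ := hv
    rw [abs_sub_comm]
    exact (mono q h2).trans ((sub_ofDigits_ge (hM.trans_le h1) hmin h h3).trans (le_abs_self _))
  · obtain ⟨q, h1, h2, h3⟩ := hu
    exact (mono q h2).trans ((sub_ofDigits_ge (hM.trans_le h1) (fun i hi ↦ (hmin i hi).symm)
      h h3).trans (le_abs_self _))

/-! ### Coding by blocks and the Hölder estimate -/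

/-- The digit sequence whose `j`-th block of length `L` is the word `e j (w j)`. -/
def blockSeq {b L C : ℕ} (hL : 0 < L) (e : ℕ → Fin C → Fin L → Fin b) (w : ℕ → Fin C) :
    ℕ → Fin b :=
  fun i ↦ e (i / L) (w (i / L)) ⟨i % L, Nat.mod_lt _ hL⟩

lemma blockSeq_apply {b L C : ℕ} (hL : 0 < L) (e : ℕ → Fin C → Fin L → Fin b) (w : ℕ → Fin C)
    (j : ℕ) (t : Fin L) : blockSeq hL e w (j * L + t) = e j (w j) t := by
  have h1 : (j * L + t) / L = j := by
    rw [mul_comm, Nat.mul_add_div hL, Nat.div_eq_of_lt t.2, add_zero]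
  have h2 : (j * L + t) % L = t := by
    rw [mul_comm, Nat.mul_add_mod, Nat.mod_eq_of_lt t.2]
  have h3 : (⟨(j * L + t) % L, Nat.mod_lt _ hL⟩ : Fin L) = t := Fin.ext h2
  simp only [blockSeq]
  rw [h3, h1]

open Real in
/-- The two bounds behind the Hölder estimate, with `n` the first index where `w` and `w'` differ:
the base-`b^(L-1)` reals agree to order `n`, and the coded reals are `b^(-(n+2)L)` apart. -/
lemma exists_scale {b L : ℕ} (hL : 0 < L) (e : ℕ → Fin (b ^ (L - 1)) → Fin L → Fin b)
    (inj : ∀ j, Function.Injective (e j)) (nz : ∀ j a, ∃ i, (e j a i : ℕ) ≠ 0)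
    {w w' : ℕ → Fin (b ^ (L - 1))} (hne : w ≠ w') :
    ∃ n : ℕ, |ofDigits w - ofDigits w'| ≤ (((b ^ (L - 1) : ℕ) : ℝ) ^ n)⁻¹ ∧
      ((b : ℝ) ^ ((n + 2) * L))⁻¹ ≤
        |ofDigits (blockSeq hL e w) - ofDigits (blockSeq hL e w')| := by
  classical
  have hex : ∃ n, w n ≠ w' n := Function.ne_iff.mp hne
  set n := Nat.find hex with hn
  refine ⟨n, abs_ofDigits_sub_ofDigits_le fun i hi ↦ not_not.mp (Nat.find_min hex hi), ?_⟩
  have hnz : ∀ w : ℕ → Fin (b ^ (L - 1)), ∃ q, (n + 1) * L ≤ q ∧ q < (n + 2) * L ∧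
      (blockSeq hL e w q : ℕ) ≠ 0 := fun w ↦ by
    obtain ⟨i, hi⟩ := nz (n + 1) (w (n + 1))
    refine ⟨(n + 1) * L + i, by omega, ?_, by rwa [blockSeq_apply]⟩
    have := i.2
    nlinarith
  refine abs_sub_ofDigits_ge (M := (n + 1) * L) ?_ (hnz w) (hnz w')
  obtain ⟨i, hi⟩ := Function.ne_iff.mp ((inj n).ne (Nat.find_spec hex))
  refine ⟨n * L + i, ?_, by rwa [blockSeq_apply, blockSeq_apply]⟩
  have := i.2
  nlinarith

open Real in
/-- If every block has `b^(L-1)` admissible words, none of them zero, the coded reals map onto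
`[0,1]` by decoding in base `b^(L-1)`. That map is Hölder of exponent `(L-1)/L`, so the dimension
of the coded set is at least `(L-1)/L`. -/
lemma le_dimH_range_blockSeq {b L : ℕ} (hb : 2 ≤ b) (hL2 : 2 ≤ L) (hL : 0 < L)
    (e : ℕ → Fin (b ^ (L - 1)) → Fin L → Fin b)
    (inj : ∀ j, Function.Injective (e j)) (nz : ∀ j a, ∃ i, (e j a i : ℕ) ≠ 0) :
    ENNReal.ofReal (1 - 1 / (L : ℝ)) ≤
      dimH (Set.range fun w ↦ ofDigits (blockSeq hL e w)) := by
  set X : (ℕ → Fin (b ^ (L - 1))) → ℝ := fun w ↦ ofDigits (blockSeq hL e w) with hX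
  have hb0 : (0 : ℝ) < b := by positivity
  have hC : 1 < b ^ (L - 1) := Nat.one_lt_pow (by omega) (by omega)
  have : NeZero (b ^ (L - 1)) := ⟨by omega⟩
  have hL0 : (L : ℝ) ≠ 0 := by positivity
  have Xinj : Function.Injective X := fun w w' h ↦ by
    by_contra hne
    obtain ⟨n, -, h2⟩ := exists_scale hL e inj nz hne
    have h3 : ofDigits (blockSeq hL e w) = ofDigits (blockSeq hL e w') := h
    rw [h3, sub_self, abs_zero] at h2
    have : (0 : ℝ) < ((b : ℝ) ^ ((n + 2) * L))⁻¹ := by positivity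
    linarith
  set f : ℝ → ℝ := fun x ↦ ofDigits (Function.invFun X x) with hf
  have hfX : ∀ w, f (X w) = ofDigits w := fun w ↦ by
    simp only [hf, Function.leftInverse_invFun Xinj w]
  set r : NNReal := ((L - 1 : ℕ) : NNReal) / L with hr
  have hr' : (r : ℝ) = (L - 1 : ℕ) / L := by
    rw [hr, NNReal.coe_div, NNReal.coe_natCast, NNReal.coe_natCast]
  have hr0 : 0 < r := by
    have : 0 < L - 1 := by omega
    positivity
  have hold : HolderOnWith (((b ^ (L - 1) : ℕ) : NNReal) ^ 2) r f (Set.range X) := by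
    rintro _ ⟨w, rfl⟩ _ ⟨w', rfl⟩
    rcases eq_or_ne w w' with rfl | hne
    · simp
    obtain ⟨n, h1, h2⟩ := exists_scale hL e inj nz hne
    rw [hfX, hfX, edist_dist, edist_dist, ENNReal.ofReal_rpow_of_nonneg dist_nonneg r.coe_nonneg,
      ← ENNReal.ofReal_coe_nnreal, ← ENNReal.ofReal_mul (by positivity)]
    apply ENNReal.ofReal_le_ofReal
    rw [Real.dist_eq, Real.dist_eq]
    have h3 := Real.rpow_le_rpow (by positivity) h2 r.coe_nonneg
    have h4 : (((b : ℝ) ^ ((n + 2) * L))⁻¹) ^ (r : ℝ)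
        = (((b ^ (L - 1) : ℕ) : ℝ) ^ (n + 2))⁻¹ := by
      rw [Real.inv_rpow (by positivity), ← Real.rpow_natCast, ← Real.rpow_mul hb0.le, hr']
      congr 1
      push_cast
      rw [← pow_mul, ← Real.rpow_natCast]
      congr 1
      push_cast
      field_simp
    calc _ ≤ _ := h1
      _ = ((b ^ (L - 1) : ℕ) : ℝ) ^ 2 * (((b ^ (L - 1) : ℕ) : ℝ) ^ (n + 2))⁻¹ := by
        have : ((b ^ (L - 1) : ℕ) : ℝ) ≠ 0 := by positivity
        field_simp
        rw [pow_add]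
      _ ≤ _ := by
        rw [← h4]
        push_cast
        exact mul_le_mul_of_nonneg_left h3 (by positivity)
  have hdim := hold.dimH_image_le hr0
  have himg : Set.Icc (0 : ℝ) 1 ⊆ f '' Set.range X := fun y hy ↦ by
    obtain ⟨w, -, rfl⟩ := ofDigits_SurjOn hC hy
    exact ⟨X w, ⟨w, rfl⟩, hfX w⟩
  have hone : (1 : ENNReal) ≤ dimH (f '' Set.range X) := by
    refine le_trans (le_of_eq ?_) (dimH_mono himg)
    rw [Real.dimH_of_nonempty_interior (by simp)]
    simp
  have h5 := hone.trans hdim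
  rw [ENNReal.le_div_iff_mul_le (Or.inl (by simpa using hr0.ne')) (Or.inl (by simp)),
    one_mul] at h5
  convert h5 using 1
  rw [← ENNReal.ofReal_coe_nnreal, hr']
  congr 1
  rw [Nat.cast_sub (by omega)]
  field_simp
  simp

/-! ### Admissible words in each block -/

/-- The part of the forbidden word `α k` (at position `k`) that lies over block `j` of length `L`.
Reduction modulo `m` makes it total; it is idle when block `j` lies inside `[k, k+m)`. -/
def blockPart {b m : ℕ} (L : ℕ) (hm : 0 < m) (α : ℕ → Fin m → Fin b) (j k : ℕ) : Fin L → Fin b :=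
  fun i ↦ α k ⟨(j * L + i - k) % m, Nat.mod_lt _ hm⟩

/-- The words refused in block `j`: the zero word, and the parts over this block of all forbidden
words whose position is one of `jL, jL-1, …, jL-(L-1)`. For `j = 0` truncated subtraction repeats
position `0`, which is harmless. -/
def badWords {b m : ℕ} [NeZero b] (L : ℕ) (hm : 0 < m) (ω τ : ℕ → Fin m → Fin b) (j : ℕ) :
    Finset (Fin L → Fin b) :=
  {0} ∪ ((Finset.range L).image (fun t ↦ blockPart L hm ω j (j * L - t)) ∪
    (Finset.range L).image (fun t ↦ blockPart L hm τ j (j * L - t)))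

lemma card_badWords_le {b m : ℕ} [NeZero b] (L : ℕ) (hm : 0 < m) (ω τ : ℕ → Fin m → Fin b)
    (j : ℕ) : (badWords L hm ω τ j).card ≤ 2 * L + 1 := by
  have h1 := Finset.card_image_le (s := Finset.range L)
    (f := fun t ↦ blockPart L hm ω j (j * L - t))
  have h2 := Finset.card_image_le (s := Finset.range L)
    (f := fun t ↦ blockPart L hm τ j (j * L - t))
  rw [Finset.card_range] at h1 h2
  refine (Finset.card_union_le _ _).trans ?_
  have h3 := Finset.card_union_le
    ((Finset.range L).image (fun t ↦ blockPart L hm ω j (j * L - t)))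
    ((Finset.range L).image (fun t ↦ blockPart L hm τ j (j * L - t)))
  rw [Finset.card_singleton]
  omega

/-- Each block has at least `b^(L-1)` words that are not refused. -/
lemma exists_code {b m L : ℕ} [NeZero b] (hb : 3 ≤ b) (hL : 3 ≤ L) (hm : 0 < m)
    (ω τ : ℕ → Fin m → Fin b) (j : ℕ) :
    ∃ e : Fin (b ^ (L - 1)) → Fin L → Fin b,
      Function.Injective e ∧ ∀ a, e a ∉ badWords L hm ω τ j := by
  classical
  have hpow : L + 1 ≤ b ^ (L - 1) := by
    have h1 : ∀ n, n + 4 ≤ 3 ^ (n + 2) := fun n ↦ by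
      induction n with
      | zero => norm_num
      | succ n ih => rw [show n + 1 + 2 = (n + 2) + 1 by ring, pow_succ]; omega
    have h2 := h1 (L - 3)
    rw [show L - 3 + 2 = L - 1 by omega] at h2
    have := Nat.pow_le_pow_left hb (L - 1)
    omega
  have hcard : b ^ (L - 1) ≤ (badWords L hm ω τ j)ᶜ.card := by
    rw [Finset.card_compl, Fintype.card_fun, Fintype.card_fin, Fintype.card_fin]
    have h1 := card_badWords_le L hm ω τ j
    have h2 : b ^ L = b ^ (L - 1) * b := by
      rw [← pow_succ]; congr 1; omega
    have h3 : b ^ (L - 1) * 3 ≤ b ^ (L - 1) * b := Nat.mul_le_mul_left _ hb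
    omega
  have hn : Nonempty (Fin (b ^ (L - 1)) ↪ ((badWords L hm ω τ j)ᶜ : Finset _)) := by
    apply Function.Embedding.nonempty_of_card_le
    simpa only [Fintype.card_fin, Fintype.card_coe] using hcard
  obtain ⟨e⟩ := hn
  exact ⟨fun a ↦ e a, fun a a' h ↦ e.injective (Subtype.ext h),
    fun a ↦ Finset.mem_compl.mp (e a).2⟩

/-- A window of length `m ≥ 2L-1` at position `k` contains the whole block `j = ⌈k/L⌉`; a block
code avoiding the bad words therefore avoids the forbidden word there. -/
lemma window_ne {b m L : ℕ} (hL : 0 < L) (hm : 0 < m) (hLm : 2 * L ≤ m + 1)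
    (α : ℕ → Fin m → Fin b) {C : ℕ} (e : ℕ → Fin C → Fin L → Fin b)
    (he : ∀ j a, ∀ t < L, e j a ≠ blockPart L hm α j (j * L - t)) (w : ℕ → Fin C) (k : ℕ) :
    (fun i : Fin m ↦ blockSeq hL e w (k + i.1)) ≠ α k := by
  intro h
  obtain ⟨j, hj1, hj2⟩ : ∃ j, k ≤ j * L ∧ j * L < k + L := by
    refine ⟨(k + L - 1) / L, ?_, ?_⟩
    · have h1 := Nat.div_add_mod (k + L - 1) L
      have h2 := Nat.mod_lt (k + L - 1) hL
      rw [mul_comm] at h1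
      omega
    · have := Nat.div_mul_le_self (k + L - 1) L
      omega
  refine he j (w j) (j * L - k) (by omega) (funext fun i ↦ ?_)
  have hi := i.2
  have hlt : j * L + i - k < m := by omega
  have h1 := congrFun h ⟨j * L + i - k, hlt⟩
  simp only [blockPart]
  rw [← blockSeq_apply hL e w j i]
  rw [show k + (j * L + i - k) = j * L + i by omega] at h1
  rw [h1]
  have h2 : j * L - (j * L - k) = k := by omega
  simp only [h2, Nat.mod_eq_of_lt hlt]

/-! ### The dimension bound -/

/-- **Lemma 6.1.** For `m ≥ 10` and any two sequences `ω, τ ∈ (D_b^m)^{ℕ₀}`,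
`dim_H K^{ω,τ} ≥ 1 - (2/(m-2)) (log m / log b + 1)`. -/
theorem dimH_two_holes_lower_bound (b m : ℕ) (hb : 3 ≤ b) (hm : 10 ≤ m)
    (ω τ : ℕ → Fin m → Fin b) :
    ENNReal.ofReal
        (1 - 2 / ((m : ℝ) - 2) * (Real.log (m : ℝ) / Real.log (b : ℝ) + 1)) ≤
      dimH (Kset2 b m ω τ) := by
  have : NeZero b := ⟨by omega⟩
  have hm0 : 0 < m := by omega
  -- The largest block length for which every window of length `m` contains a full block.
  obtain ⟨L, hL1, hL2⟩ : ∃ L, 2 * L ≤ m + 1 ∧ m ≤ 2 * L := ⟨(m + 1) / 2, by omega, by omega⟩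
  have hL : 0 < L := by omega
  choose e inj hbad using fun j ↦ exists_code (L := L) hb (by omega) hm0 ω τ j
  have nz : ∀ j a, ∃ i, (e j a i : ℕ) ≠ 0 := fun j a ↦ by
    by_contra! h
    apply hbad j a
    have : e j a = 0 := funext fun i ↦ Fin.ext (by simpa using h i)
    simp [badWords, this]
  have hω : ∀ j a, ∀ t < L, e j a ≠ blockPart L hm0 ω j (j * L - t) := fun j a t ht h ↦ by
    refine hbad j a (Finset.mem_union_right _ (Finset.mem_union_left _ ?_))
    exact Finset.mem_image.mpr ⟨t, Finset.mem_range.mpr ht, h.symm⟩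
  have hτ : ∀ j a, ∀ t < L, e j a ≠ blockPart L hm0 τ j (j * L - t) := fun j a t ht h ↦ by
    refine hbad j a (Finset.mem_union_right _ (Finset.mem_union_right _ ?_))
    exact Finset.mem_image.mpr ⟨t, Finset.mem_range.mpr ht, h.symm⟩
  have hsub : (Set.range fun w ↦ Real.ofDigits (blockSeq hL e w)) ⊆ Kset2 b m ω τ := by
    rintro _ ⟨w, rfl⟩
    refine ⟨blockSeq hL e w, fun k ↦ ⟨window_ne hL hm0 hL1 ω e hω w k,
      window_ne hL hm0 hL1 τ e hτ w k⟩, ?_⟩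
    simp only [Real.ofDigits, Real.ofDigitsTerm, div_eq_mul_inv]
  refine le_trans (ENNReal.ofReal_le_ofReal ?_) ((le_dimH_range_blockSeq (by omega) (by omega) hL
    e inj nz).trans (dimH_mono hsub))
  -- Numerically `1/L ≤ 2/m ≤ 2/(m-2)`, and the logarithmic factor is at least `1`.
  have hmR : (10 : ℝ) ≤ m := by exact_mod_cast hm
  have hLR : (m : ℝ) ≤ 2 * L := by exact_mod_cast hL2
  have hlog : 0 ≤ Real.log (m : ℝ) / Real.log (b : ℝ) :=
    div_nonneg (Real.log_natCast_nonneg m) (Real.log_natCast_nonneg b)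
  have h1 : 1 / (L : ℝ) ≤ 2 / ((m : ℝ) - 2) := by
    rw [div_le_div_iff₀ (by linarith) (by linarith)]
    linarith
  have h2 : 0 ≤ 2 / ((m : ℝ) - 2) := div_nonneg (by norm_num) (by linarith)
  nlinarith [mul_nonneg h2 hlog]

end Paper
end
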